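/- arXiv:2402.07968 — 2 statements merged into one kernel-verified Lean document; each statement's English description precedes it below -/
import Mathlib

section
/- Let G be a nontrivial connected graph. If G admits a minimum-weight total Roman {2}-dominating function f = (V_0, V_1, V_2) with V_2 = ∅, then γ_{tR2}(G) = γ_{×2}(G), the double domination number of G. -/
/-- `f` is a total Roman {2}-dominating function on `G`. -/
def IsTR2DF {V : Type*} (G : SimpleGraph V) (f : V → ℕ) : Prop :=
  (∀ v, f v ≤ 2) ∧
  (∀ v, f v = 0 →
    (∃ u, G.Adj u v ∧ f u = 2) ∨
    (∃ x y, x ≠ y ∧ G.Adj x v ∧ G.Adj y v ∧ f x = 1 ∧ f y = 1)) ∧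
  (∀ v, 0 < f v → ∃ u, G.Adj u v ∧ 0 < f u)

/-- The total Roman {2}-domination number of `G`. -/
noncomputable def tR2 {V : Type*} [Fintype V] (G : SimpleGraph V) : ℕ :=
  sInf {w | ∃ f : V → ℕ, IsTR2DF G f ∧ ∑ v, f v = w}

/-- The double domination number of `G`. -/
noncomputable def ddomNum {V : Type*} [Fintype V] (G : SimpleGraph V) : ℕ :=
  sInf {k | ∃ S : Finset V,
    (∀ v : V, ∃ a ∈ S, ∃ b ∈ S, a ≠ b ∧ (a = v ∨ G.Adj a v) ∧ (b = v ∨ G.Adj b v)) ∧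
    S.card = k}

/-!
The `{0, 1}`-valued total Roman {2}-dominating functions are exactly the indicator functions of
the double dominating sets, and the weight of an indicator is the cardinality of its set. Hence
`γ_{tR2} ≤ γ_{×2}` as soon as a double dominating set exists, and a minimum-weight function that
avoids the value `2` is the indicator of a double dominating set with `γ_{tR2}` elements.
-/

open Finset

lemma exists_eq_indicator_one_of_le_one {ι : Type*} {f : ι → ℕ} (hf : f ≤ 1) :
    ∃ S : Set ι, f = S.indicator 1 := by
  refine ⟨Function.support f, funext fun i ↦ ?_⟩
  obtain hi | hi := Nat.le_one_iff_eq_zero_or_eq_one.1 (hf i) <;> simp [hi]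

lemma sum_univ_indicator_one {ι R : Type*} [Fintype ι] [AddCommMonoidWithOne R] (S : Finset ι) :
    ∑ i, (S : Set ι).indicator (1 : ι → R) i = #S := by
  rw [sum_indicator_subset _ S.subset_univ]
  simp only [Pi.one_apply, sum_const, nsmul_one]

section

variable {V : Type*} {G : SimpleGraph V}

/-- `S` is a double dominating set of `G`: every closed neighborhood contains two distinct elements
of `S`. Arbitrary sets are allowed, so that the notion makes sense on infinite graphs; the condition
is written so that for finsets it unfolds to the one in `ddomNum`. -/
def IsDoubleDominating (G : SimpleGraph V) (S : Set V) : Prop :=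
  ∀ v : V, ∃ a ∈ S, ∃ b ∈ S, a ≠ b ∧ (a = v ∨ G.Adj a v) ∧ (b = v ∨ G.Adj b v)

lemma isDoubleDominating_iff {S : Set V} :
    IsDoubleDominating G S ↔
      (∀ v ∉ S, ∃ a ∈ S, ∃ b ∈ S, a ≠ b ∧ G.Adj a v ∧ G.Adj b v) ∧
      ∀ v ∈ S, ∃ u ∈ S, G.Adj u v := by
  refine ⟨fun hS ↦ ⟨fun v hv ↦ ?_, fun v _ ↦ ?_⟩, fun ⟨hout, hin⟩ v ↦ ?_⟩
  · obtain ⟨a, ha, b, hb, hab, hav, hbv⟩ := hS v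
    exact ⟨a, ha, b, hb, hab, hav.resolve_left (ne_of_mem_of_not_mem ha hv),
      hbv.resolve_left (ne_of_mem_of_not_mem hb hv)⟩
  · obtain ⟨a, ha, b, hb, hab, rfl | hav, hbv⟩ := hS v
    · exact ⟨b, hb, hbv.resolve_left hab.symm⟩
    · exact ⟨a, ha, hav⟩
  · by_cases hv : v ∈ S
    · obtain ⟨u, hu, huv⟩ := hin v hv
      exact ⟨u, hu, v, hv, huv.ne, Or.inr huv, Or.inl rfl⟩
    · obtain ⟨a, ha, b, hb, hab, hav, hbv⟩ := hout v hv
      exact ⟨a, ha, b, hb, hab, Or.inr hav, Or.inr hbv⟩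

lemma isTR2DF_indicator_one_iff {S : Set V} :
    IsTR2DF G (S.indicator 1) ↔ IsDoubleDominating G S := by
  have le_one (v : V) : S.indicator (1 : V → ℕ) v ≤ 1 := Set.indicator_le_self' (by simp) v
  have ne_two (v : V) : S.indicator (1 : V → ℕ) v ≠ 2 := ((le_one v).trans_lt one_lt_two).ne
  have le_two (v : V) : S.indicator (1 : V → ℕ) v ≤ 2 := (le_one v).trans one_le_two
  rw [isDoubleDominating_iff]
  simp only [IsTR2DF, le_two, ne_two, pos_iff_ne_zero, ne_eq, Set.indicator_eq_zero_iff_notMem,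
    Set.indicator_eq_one_iff_mem, not_not, and_false, exists_false, false_or, implies_true,
    true_and]
  refine and_congr (forall₂_congr fun v _ ↦ ?_) (forall₂_congr fun v _ ↦ ?_)
  · exact ⟨fun ⟨a, b, hab, hav, hbv, ha, hb⟩ ↦ ⟨a, ha, b, hb, hab, hav, hbv⟩,
      fun ⟨a, ha, b, hb, hab, hav, hbv⟩ ↦ ⟨a, b, hab, hav, hbv, ha, hb⟩⟩
  · exact exists_congr fun u ↦ and_comm

end

section

variable {V : Type*} [Fintype V] {G : SimpleGraph V}

lemma tR2_le_sum {f : V → ℕ} (hf : IsTR2DF G f) : tR2 G ≤ ∑ v, f v :=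
  Nat.sInf_le ⟨f, hf, rfl⟩

lemma ddomNum_le_card {S : Finset V} (hS : IsDoubleDominating G S) : ddomNum G ≤ #S :=
  Nat.sInf_le ⟨S, hS, rfl⟩

lemma IsDoubleDominating.exists_card_eq_ddomNum {S : Finset V} (hS : IsDoubleDominating G S) :
    ∃ T : Finset V, IsDoubleDominating G T ∧ #T = ddomNum G := by
  have hne : {k | ∃ T : Finset V, IsDoubleDominating G T ∧ #T = k}.Nonempty := ⟨#S, S, hS, rfl⟩
  exact Nat.sInf_mem hne

lemma IsDoubleDominating.tR2_le_ddomNum {S : Finset V} (hS : IsDoubleDominating G S) :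
    tR2 G ≤ ddomNum G := by
  obtain ⟨T, hT, hTcard⟩ := hS.exists_card_eq_ddomNum
  calc tR2 G ≤ ∑ v, (T : Set V).indicator 1 v := tR2_le_sum (isTR2DF_indicator_one_iff.2 hT)
    _ = #T := sum_univ_indicator_one T
    _ = ddomNum G := hTcard

end

theorem stmt5_general {V : Type*} [Fintype V] (G : SimpleGraph V)
    (h : ∃ f : V → ℕ, IsTR2DF G f ∧ ∑ v, f v = tR2 G ∧ ∀ v, f v ≠ 2) :
    tR2 G = ddomNum G := by
  obtain ⟨f, hf, hweight, hf₂⟩ := h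
  have hf₁ : f ≤ 1 := fun v ↦ Nat.le_of_lt_succ ((hf.1 v).lt_of_ne (hf₂ v))
  obtain ⟨S, rfl⟩ := exists_eq_indicator_one_of_le_one hf₁
  lift S to Finset V using S.toFinite
  have hS : IsDoubleDominating G S := isTR2DF_indicator_one_iff.1 hf
  refine hS.tR2_le_ddomNum.antisymm ?_
  calc ddomNum G ≤ #S := ddomNum_le_card hS
    _ = ∑ v, (S : Set V).indicator 1 v := (sum_univ_indicator_one S).symm
    _ = tR2 G := hweight

theorem stmt5 {V : Type*} [Fintype V] (G : SimpleGraph V)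
    (hconn : G.Connected) (hnt : Nontrivial V)
    (h : ∃ f : V → ℕ, IsTR2DF G f ∧ ∑ v, f v = tR2 G ∧ ∀ v, f v ≠ 2) :
    tR2 G = ddomNum G :=
  stmt5_general G h
end

section
/- For every tree T of order n(T) ≥ 4 with s(T) support vertices, γ_{tR2}(T) ≤ (3n(T) + 2s(T))/4, with equality if and only if T is the corona of a tree. -/
/-- `T` is the corona of a tree: `T` is a tree admitting a perfect matching
`m` such that each matched pair contains a leaf. -/
def IsCoronaOfTree {V : Type*} [Fintype V] (T : SimpleGraph V)
    [DecidableRel T.Adj] : Prop :=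
  T.IsTree ∧ ∃ m : V → V, Function.Involutive m ∧ (∀ v, m v ≠ v) ∧
    (∀ v, T.Adj v (m v)) ∧ (∀ v, T.degree v = 1 ∨ T.degree (m v) = 1)

/-!
A tree that is not a star is coloured by the distance to a fixed leaf modulo 3, so that every vertex
that is not a leaf has neighbours of both colours other than its own. Each colour `i` yields a
function that puts weight 2 on the strong support vertices, weight 1 on the other support vertices
and on their single leaves, and weight 1 on the inner vertices of colour different from `i`. An
inner vertex of weight 0 then has two positive neighbours, and only strong support vertices can be
isolated among the positive vertices; those are repaired at a cost of 1 each. A strong support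
vertex needs repair for at most one colour, because it has a non-leaf neighbour, which is positive
for the colours other than its own.

With `n` vertices, `l` leaves, `s` support vertices, of which `b` are strong, and `k` inner
vertices, averaging over the three colours gives `3 γ ≤ 6 s + 2 k + b`. Together with `s + b ≤ l`
and `l + s + k = n` this yields `12 γ + k + 5 b ≤ 9 n + 6 s`. Equality in the theorem therefore
forces `k = b = 0`, which says that the tree is a corona. Conversely the two vertices of a matched
pair in a corona carry total weight at least 2, so there `γ = n = 2 s`. Stars satisfy `γ ≤ 3`, which
is below the bound as soon as `n ≥ 4`.
-/

namespace TotalRomanDomination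

open Finset

variable {V : Type*} {G : SimpleGraph V}

section LevelSets

variable (G) in
/-- The Roman `{2}`-dominating functions on `G`, where isolated positive vertices are allowed.
A function with values in `{0, 1, 2}` is encoded by its level sets `A = {f ≥ 1}` and
`B = {f = 2}`, so its weight is `#A + #B`. -/
structure IsRomanPair (A B : Finset V) : Prop where
  subset : B ⊆ A
  dominates : ∀ v ∉ A,
    (∃ u ∈ B, G.Adj v u) ∨ ∃ x ∈ A, ∃ y ∈ A, x ≠ y ∧ G.Adj v x ∧ G.Adj v y

variable {A A' B : Finset V}

theorem IsRomanPair.mono (h : IsRomanPair G A B) (hA : A ⊆ A') : IsRomanPair G A' B where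
  subset := h.subset.trans hA
  dominates v hv := (h.dominates v fun hvA ↦ hv (hA hvA)).imp_right
    fun ⟨x, hx, y, hy, hxy⟩ ↦ ⟨x, hA hx, y, hA hy, hxy⟩

variable [Fintype V]

theorem tR2_le_sum {f : V → ℕ} (hf : IsTR2DF G f) : tR2 G ≤ ∑ v, f v :=
  Nat.sInf_le ⟨f, hf, rfl⟩

theorem exists_isTR2DF_sum_eq_tR2 (hadj : ∀ v, ∃ u, G.Adj v u) :
    ∃ f, IsTR2DF G f ∧ ∑ v, f v = tR2 G :=
  Nat.sInf_mem (s := {w | ∃ f, IsTR2DF G f ∧ ∑ v, f v = w})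
    ⟨_, fun _ ↦ 1, ⟨by simp, by simp, fun v _ ↦ (hadj v).imp fun _ h ↦ ⟨h.symm, one_pos⟩⟩, rfl⟩

theorem IsRomanPair.tR2_le (h : IsRomanPair G A B) (htotal : ∀ v ∈ A, ∃ u ∈ A, G.Adj v u) :
    tR2 G ≤ #A + #B := by
  classical
  let f : V → ℕ := fun v ↦ (if v ∈ A then 1 else 0) + if v ∈ B then 1 else 0
  have hf_two {v : V} (hv : v ∈ B) : f v = 2 := by simp [f, hv, h.subset hv]
  have hf_one {v : V} (hv : v ∈ A) (hv' : v ∉ B) : f v = 1 := by simp [f, hv, hv']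
  have hf_pos {v : V} : 0 < f v ↔ v ∈ A := by
    by_cases hv : v ∈ A
    · simp [f, hv]
    · simp [f, hv, mt (@h.subset v) hv]
  have hf : IsTR2DF G f := by
    refine ⟨fun v ↦ ?_, fun v hv ↦ ?_, fun v hv ↦ ?_⟩
    · simp only [f]
      split_ifs <;> norm_num
    · have hvA : v ∉ A := fun hvA ↦ (hf_pos.2 hvA).ne' hv
      rcases h.dominates v hvA with ⟨u, hu, huv⟩ | ⟨x, hx, y, hy, hxy, hvx, hvy⟩
      · exact .inl ⟨u, huv.symm, hf_two hu⟩
      by_cases hxB : x ∈ B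
      · exact .inl ⟨x, hvx.symm, hf_two hxB⟩
      by_cases hyB : y ∈ B
      · exact .inl ⟨y, hvy.symm, hf_two hyB⟩
      exact .inr ⟨x, y, hxy, hvx.symm, hvy.symm, hf_one hx hxB, hf_one hy hyB⟩
    · obtain ⟨u, hu, hvu⟩ := htotal v (hf_pos.1 hv)
      exact ⟨u, hvu.symm, hf_pos.2 hu⟩
  simpa [f, sum_add_distrib] using tR2_le_sum hf

-- The isolated vertices of `A` are repaired by adding to `A` one neighbour of each vertex of `J`.
theorem IsRomanPair.tR2_le_add_card {J : Finset V} (h : IsRomanPair G A B)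
    (hadj : ∀ v, ∃ u, G.Adj v u) (hJA : J ⊆ A)
    (hJ : ∀ v ∈ A, v ∉ J → ∃ u ∈ A, G.Adj v u) : tR2 G ≤ #A + #B + #J := by
  classical
  choose p hp using hadj
  have htotal : ∀ v ∈ A ∪ J.image p, ∃ u ∈ A ∪ J.image p, G.Adj v u := by
    intro v hv
    rcases mem_union.1 hv with hvA | hvJ
    · by_cases hiso : v ∈ J
      · exact ⟨p v, mem_union_right _ (mem_image_of_mem p hiso), hp v⟩
      · exact (hJ v hvA hiso).imp fun u hu ↦ hu.imp_left (mem_union_left _)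
    · obtain ⟨w, hw, rfl⟩ := mem_image.1 hvJ
      exact ⟨w, mem_union_left _ (hJA hw), (hp w).symm⟩
  calc tR2 G ≤ #(A ∪ J.image p) + #B := (h.mono subset_union_left).tR2_le htotal
    _ ≤ #A + #J + #B := by
        gcongr
        exact (card_union_le _ _).trans (Nat.add_le_add_left card_image_le _)
    _ = #A + #B + #J := Nat.add_right_comm _ _ _

theorem tR2_le_card (hadj : ∀ v, ∃ u, G.Adj v u) : tR2 G ≤ Fintype.card V := by
  have hpair : IsRomanPair G univ ∅ := ⟨empty_subset _, by simp⟩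
  simpa using hpair.tR2_le (by simpa using hadj)

theorem tR2_le_three_of_isUniversal [Nontrivial V] {s : V} (hs : G.IsUniversal s) :
    tR2 G ≤ 3 := by
  classical
  obtain ⟨l, hl⟩ := exists_ne s
  have hpair : IsRomanPair G {s, l} {s} :=
    ⟨by simp, fun v hv ↦ .inl ⟨s, by simp, (hs fun h ↦ hv (by simp [h])).symm⟩⟩
  have hle := hpair.tR2_le (by simp [hs hl.symm, (hs hl.symm).symm])
  rwa [card_pair hl.symm, card_singleton] at hle

end LevelSets

section Leaves

theorem eq_of_adj_of_degree_eq_one {u v w : V} [Fintype (G.neighborSet u)]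
    (hu : G.degree u = 1) (hv : G.Adj u v) (hw : G.Adj u w) : v = w :=
  (SimpleGraph.degree_eq_one_iff_existsUnique_adj.1 hu).unique hv hw

theorem two_le_add_of_adj_of_degree_eq_one {f : V → ℕ} (hf : IsTR2DF G f) {u v : V}
    [Fintype (G.neighborSet u)] (hu : G.degree u = 1) (huv : G.Adj u v) : 2 ≤ f u + f v := by
  obtain ⟨-, hzero, hpos⟩ := hf
  have hunique {w : V} (hw : G.Adj w u) : w = v := eq_of_adj_of_degree_eq_one hu hw.symm huv
  rcases (f u).eq_zero_or_pos with hfu | hfu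
  · rcases hzero u hfu with ⟨w, hw, hfw⟩ | ⟨x, y, hxy, hx, hy, -, -⟩
    · rw [← hunique hw]
      omega
    · exact absurd ((hunique hx).trans (hunique hy).symm) hxy
  · obtain ⟨w, hw, hfw⟩ := hpos u hfu
    rw [← hunique hw]
    omega

variable [Fintype V] [DecidableRel G.Adj]

theorem isUniversal_of_forall_adj_degree_eq_one (hG : G.Connected) {v : V}
    (hv : ∀ u, G.Adj v u → G.degree u = 1) : G.IsUniversal v := by
  intro w hvw
  by_contra hnadj
  obtain ⟨p⟩ := hG v w
  obtain ⟨⟨⟨x, y⟩, hxy⟩, -, hx, hy⟩ :=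
    p.exists_boundary_dart (insert v (G.neighborSet v)) (by simp) (by simp [hvw.symm, hnadj])
  simp only [Set.mem_insert_iff, SimpleGraph.mem_neighborSet, not_or] at hx hy
  rcases hx with rfl | hvx
  · exact hy.2 hxy
  · exact hy.1 (eq_of_adj_of_degree_eq_one (hv x hvx) hxy hvx.symm)

theorem degree_ne_one_of_adj_of_degree_eq_one (hG : G.Connected) (hn : 3 ≤ Fintype.card V)
    {u v : V} (huv : G.Adj u v) (hu : G.degree u = 1) : G.degree v ≠ 1 := by
  intro hv
  have huniv : G.IsUniversal u := isUniversal_of_forall_adj_degree_eq_one hG fun w hw ↦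
    eq_of_adj_of_degree_eq_one hu huv hw ▸ hv
  have := (G.degree_eq_card_sub_one u).2 huniv
  omega

variable (G) in
/-- The leaves of `G`. -/
def leaves : Finset V := {v | G.degree v = 1}

variable (G) in
/-- The leaves of `G` adjacent to `v`. -/
def leafNeighbors (v : V) : Finset V := {u ∈ G.neighborFinset v | G.degree u = 1}

variable (G) in
/-- The support vertices of `G`: those adjacent to a leaf. -/
def supports : Finset V := {v | ∃ u, G.Adj v u ∧ G.degree u = 1}

variable (G) in
/-- The strong support vertices of `G`: those adjacent to at least two leaves. -/
def strongSupports : Finset V := {v | 1 < #(leafNeighbors G v)}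

@[simp]
theorem mem_leaves {v : V} : v ∈ leaves G ↔ G.degree v = 1 := by
  simp [leaves]

@[simp]
theorem mem_leafNeighbors {u v : V} : u ∈ leafNeighbors G v ↔ G.Adj v u ∧ G.degree u = 1 := by
  simp [leafNeighbors]

@[simp]
theorem mem_supports {v : V} : v ∈ supports G ↔ ∃ u, G.Adj v u ∧ G.degree u = 1 := by
  simp [supports]

@[simp]
theorem mem_strongSupports {v : V} : v ∈ strongSupports G ↔ 1 < #(leafNeighbors G v) := by
  simp [strongSupports]

theorem card_leafNeighbors_pos {v : V} : 0 < #(leafNeighbors G v) ↔ v ∈ supports G := by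
  simp [card_pos, Finset.Nonempty]

theorem strongSupports_subset_supports : strongSupports G ⊆ supports G := fun _ hv ↦
  card_leafNeighbors_pos.1 (Nat.zero_lt_of_lt (mem_strongSupports.1 hv))

theorem supports_nonempty_of_isTree [Nontrivial V] (hG : G.IsTree) : (supports G).Nonempty := by
  obtain ⟨u, hu⟩ := hG.exists_vert_degree_one_of_nontrivial
  obtain ⟨v, huv⟩ := hG.connected.preconnected.exists_adj_of_nontrivial u
  exact ⟨v, mem_supports.2 ⟨u, huv.symm, hu⟩⟩

theorem disjoint_leaves_supports (hG : G.Connected) (hn : 3 ≤ Fintype.card V) :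
    Disjoint (leaves G) (supports G) := by
  simp only [disjoint_left, mem_leaves, mem_supports, not_exists, not_and]
  exact fun v hv u hvu ↦ degree_ne_one_of_adj_of_degree_eq_one hG hn hvu hv

theorem sum_card_leafNeighbors : ∑ v, #(leafNeighbors G v) = #(leaves G) :=
  calc ∑ v, #(leafNeighbors G v)
      = ∑ v, #((leaves G).bipartiteAbove G.Adj v) := by
        refine sum_congr rfl fun v _ ↦ congrArg card ?_
        ext u
        simp [bipartiteAbove, and_comm]
    _ = ∑ u ∈ leaves G, #(univ.bipartiteBelow G.Adj u) :=
        sum_card_bipartiteAbove_eq_sum_card_bipartiteBelow _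
    _ = ∑ u ∈ leaves G, 1 := by
        refine sum_congr rfl fun u hu ↦ ?_
        rw [← mem_leaves.1 hu, ← G.card_neighborFinset_eq_degree]
        congr 1
        ext v
        simp [bipartiteBelow, G.adj_comm]
    _ = #(leaves G) := by simp

theorem card_supports_add_card_strongSupports_le :
    #(supports G) + #(strongSupports G) ≤ #(leaves G) := by
  classical
  calc #(supports G) + #(strongSupports G)
      = ∑ v, ((if v ∈ supports G then 1 else 0) + if v ∈ strongSupports G then 1 else 0) := by
        simp [sum_add_distrib, -mem_supports, -mem_strongSupports]
    _ ≤ ∑ v, #(leafNeighbors G v) := by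
        refine sum_le_sum fun v _ ↦ ?_
        simp only [← card_leafNeighbors_pos, mem_strongSupports]
        split_ifs <;> omega
    _ = #(leaves G) := sum_card_leafNeighbors

variable [DecidableEq V]

variable (G) in
/-- The vertices of `G` that are neither leaves nor support vertices. -/
def innerVertices : Finset V := (leaves G ∪ supports G)ᶜ

@[simp]
theorem mem_innerVertices {v : V} : v ∈ innerVertices G ↔ v ∉ leaves G ∧ v ∉ supports G := by
  simp [innerVertices]

theorem card_leaves_add_card_supports_add_card_innerVertices
    (h : Disjoint (leaves G) (supports G)) :
    #(leaves G) + #(supports G) + #(innerVertices G) = Fintype.card V := by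
  rw [← card_union_of_disjoint h, innerVertices, card_add_card_compl]

end Leaves

section Coloring

variable (G) in
/-- A vertex colouring with three colours, not required to be proper, in which every vertex that is
not a leaf has neighbours of both colours other than its own. -/
def SeesOtherColors [G.LocallyFinite] (c : V → ZMod 3) : Prop :=
  ∀ v, G.degree v ≠ 1 → ∀ j ≠ c v, ∃ u, G.Adj v u ∧ c u = j

variable [Fintype V] [DecidableEq V] [DecidableRel G.Adj]

variable (G) in
/-- The vertices of positive weight in the candidate function attached to the colour `i`: all
support vertices, the leaf of each support vertex that has only one, and the inner vertices whose
colour is not `i`. The strong support vertices are the ones of weight `2`. -/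
def positiveVertices (c : V → ZMod 3) (i : ZMod 3) : Finset V :=
  supports G ∪ (supports G \ strongSupports G).biUnion (leafNeighbors G) ∪
    {v ∈ innerVertices G | c v ≠ i}

variable {c : V → ZMod 3} {i : ZMod 3} {u v : V}

theorem supports_subset_positiveVertices : supports G ⊆ positiveVertices G c i :=
  subset_union_left.trans subset_union_left

theorem mem_positiveVertices_of_mem_leafNeighbors (hv : v ∈ supports G)
    (hv' : v ∉ strongSupports G) (hu : u ∈ leafNeighbors G v) : u ∈ positiveVertices G c i :=
  mem_union_left _ (mem_union_right _ (mem_biUnion.2 ⟨v, mem_sdiff.2 ⟨hv, hv'⟩, hu⟩))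

theorem mem_positiveVertices_of_ne (hv : G.degree v ≠ 1) (hi : c v ≠ i) :
    v ∈ positiveVertices G c i := by
  by_cases hs : v ∈ supports G
  · exact supports_subset_positiveVertices hs
  · exact mem_union_right _ (mem_filter.2 ⟨mem_innerVertices.2 ⟨by simpa using hv, hs⟩, hi⟩)

theorem card_positiveVertices_add_card_strongSupports_le :
    #(positiveVertices G c i) + #(strongSupports G) ≤
      2 * #(supports G) + #{v ∈ innerVertices G | c v ≠ i} := by
  have hleaf : #((supports G \ strongSupports G).biUnion (leafNeighbors G)) ≤
      #(supports G \ strongSupports G) * 1 :=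
    card_biUnion_le_card_mul _ _ _ fun v hv ↦ by simpa using (mem_sdiff.1 hv).2
  have hsdiff := card_sdiff_add_card_eq_card (strongSupports_subset_supports (G := G))
  have hunion := card_union_le
    (supports G ∪ (supports G \ strongSupports G).biUnion (leafNeighbors G))
    {v ∈ innerVertices G | c v ≠ i}
  have hunion' := card_union_le (supports G)
    ((supports G \ strongSupports G).biUnion (leafNeighbors G))
  unfold positiveVertices
  omega

theorem exists_mem_positiveVertices_adj_of_mem_innerVertices
    (hc : SeesOtherColors G c) (hv : v ∈ innerVertices G) {j : ZMod 3} (hj : j ≠ c v)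
    (hji : j ≠ i) :
    ∃ u ∈ positiveVertices G c i, G.Adj v u ∧ c u = j := by
  simp only [mem_innerVertices, mem_leaves, mem_supports, not_exists, not_and] at hv
  obtain ⟨u, hvu, hu⟩ := hc v hv.1 j hj
  exact ⟨u, mem_positiveVertices_of_ne (hv.2 u hvu) (hu ▸ hji), hvu, hu⟩

theorem isRomanPair_positiveVertices (hadj : ∀ v, ∃ u, G.Adj v u) (hc : SeesOtherColors G c) :
    IsRomanPair G (positiveVertices G c i) (strongSupports G) := by
  refine ⟨strongSupports_subset_supports.trans supports_subset_positiveVertices, fun v hv ↦ ?_⟩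
  by_cases hleaf : G.degree v = 1
  · obtain ⟨u, hvu⟩ := hadj v
    refine .inl ⟨u, by_contra fun hu ↦ hv ?_, hvu⟩
    exact mem_positiveVertices_of_mem_leafNeighbors (mem_supports.2 ⟨v, hvu.symm, hleaf⟩) hu
      (mem_leafNeighbors.2 ⟨hvu.symm, hleaf⟩)
  · have hvi : c v = i := by_contra fun h ↦ hv (mem_positiveVertices_of_ne hleaf h)
    have hinner : v ∈ innerVertices G := mem_innerVertices.2
      ⟨by simpa using hleaf, fun h ↦ hv (supports_subset_positiveVertices h)⟩
    have hcolors : ∀ k : ZMod 3, k + 1 ≠ k ∧ k - 1 ≠ k ∧ k + 1 ≠ k - 1 := by decide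
    obtain ⟨hi₁, hi₂, hi₁₂⟩ := hcolors i
    obtain ⟨x, hx, hvx, hcx⟩ :=
      exists_mem_positiveVertices_adj_of_mem_innerVertices hc hinner (hvi ▸ hi₁) hi₁
    obtain ⟨y, hy, hvy, hcy⟩ :=
      exists_mem_positiveVertices_adj_of_mem_innerVertices hc hinner (hvi ▸ hi₂) hi₂
    exact .inr ⟨x, hx, y, hy, fun h ↦ hi₁₂ (by rw [← hcx, ← hcy, h]), hvx, hvy⟩

theorem mem_strongSupports_of_forall_not_adj
    (hc : SeesOtherColors G c) (hv : v ∈ positiveVertices G c i)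
    (hiso : ∀ u ∈ positiveVertices G c i, ¬ G.Adj v u) :
    v ∈ strongSupports G := by
  rcases mem_union.1 hv with hv' | hinner
  · rcases mem_union.1 hv' with hs | hleaf
    · by_contra hweak
      obtain ⟨u, hvu, hu⟩ := mem_supports.1 hs
      exact hiso u
        (mem_positiveVertices_of_mem_leafNeighbors hs hweak (mem_leafNeighbors.2 ⟨hvu, hu⟩)) hvu
    · obtain ⟨s, hs, hvs⟩ := mem_biUnion.1 hleaf
      exact absurd (mem_leafNeighbors.1 hvs).1.symm
        (hiso s (supports_subset_positiveVertices (mem_sdiff.1 hs).1))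
  · obtain ⟨hinner, -⟩ := mem_filter.1 hinner
    have hthird : ∀ k l : ZMod 3, ∃ j, j ≠ k ∧ j ≠ l := by decide
    obtain ⟨j, hj, hji⟩ := hthird (c v) i
    obtain ⟨u, hu, hvu, -⟩ :=
      exists_mem_positiveVertices_adj_of_mem_innerVertices hc hinner hj hji
    exact absurd hvu (hiso u hu)

theorem tR2_le_of_color {g : V → V} (hg : ∀ v, G.Adj v (g v) ∧ G.degree (g v) ≠ 1)
    (hc : SeesOtherColors G c) (i : ZMod 3) :
    tR2 G ≤ 2 * #(supports G) + #{v ∈ innerVertices G | c v ≠ i} +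
      #{v ∈ strongSupports G | c (g v) = i} := by
  have hadj (v : V) : ∃ u, G.Adj v u := ⟨g v, (hg v).1⟩
  have hle := (isRomanPair_positiveVertices (i := i) hadj hc).tR2_le_add_card
    (J := {v ∈ strongSupports G | c (g v) = i}) hadj
    ((filter_subset _ _).trans <|
      strongSupports_subset_supports.trans supports_subset_positiveVertices)
    fun v hv hvJ ↦ by
      by_contra! hiso
      refine hvJ (mem_filter.2 ⟨mem_strongSupports_of_forall_not_adj hc hv hiso, ?_⟩)
      by_contra hgi
      exact hiso _ (mem_positiveVertices_of_ne (hg v).2 hgi) (hg v).1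
  have hweight := card_positiveVertices_add_card_strongSupports_le (G := G) (c := c) (i := i)
  omega

theorem three_mul_tR2_le (hG : ∀ v, ∃ u, G.Adj v u ∧ G.degree u ≠ 1)
    (hc : SeesOtherColors G c) :
    3 * tR2 G ≤ 6 * #(supports G) + 2 * #(innerVertices G) + #(strongSupports G) := by
  choose g hg using hG
  have hinner : ∑ i, #{v ∈ innerVertices G | c v ≠ i} = 2 * #(innerVertices G) := by
    have hfiber := card_eq_sum_card_fiberwise (f := c) (s := innerVertices G) (t := univ) (by simp)
    have hsplit (i : ZMod 3) := card_filter_add_card_filter_not (s := innerVertices G) (c · = i)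
    have hsum := Finset.sum_congr (rfl : (univ : Finset (ZMod 3)) = univ) fun i _ ↦ hsplit i
    rw [sum_add_distrib, ← hfiber, sum_const, card_univ, ZMod.card, smul_eq_mul] at hsum
    simp only [ne_eq]
    omega
  have hstrong : ∑ i, #{v ∈ strongSupports G | c (g v) = i} = #(strongSupports G) :=
    (card_eq_sum_card_fiberwise (by simp)).symm
  calc 3 * tR2 G = ∑ _i : ZMod 3, tR2 G := by simp
    _ ≤ ∑ i, (2 * #(supports G) + #{v ∈ innerVertices G | c v ≠ i} +
          #{v ∈ strongSupports G | c (g v) = i}) :=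
        sum_le_sum fun i _ ↦ tR2_le_of_color hg hc i
    _ = 6 * #(supports G) + 2 * #(innerVertices G) + #(strongSupports G) := by
        rw [sum_add_distrib, sum_add_distrib, hinner, hstrong, sum_const, card_univ, ZMod.card,
          smul_eq_mul]
        ring

end Coloring

section Tree

theorem existsUnique_adj_dist_eq_dist_add_one (hG : G.IsTree) {r v : V} (hv : v ≠ r) :
    ∃! u, G.Adj v u ∧ G.dist r v = G.dist r u + 1 := by
  obtain ⟨p, hp, hlen⟩ := hG.connected.exists_path_of_dist v r
  have hadj : G.Adj v p.snd := p.adj_snd (p.not_nil_of_ne hv)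
  refine ⟨p.snd, ⟨hadj, ?_⟩, fun u ⟨hvu, hdist⟩ ↦ ?_⟩
  · have htail := p.length_tail_add_one (p.not_nil_of_ne hv)
    have hle := SimpleGraph.dist_le p.tail
    have := hG.dist_eq_dist_add_one_of_adj r hadj
    rw [SimpleGraph.dist_comm] at hlen hle
    omega
  · obtain ⟨q, -, hqlen⟩ := hG.connected.exists_path_of_dist u r
    have hcons : (SimpleGraph.Walk.cons hvu q).IsPath :=
      SimpleGraph.Walk.isPath_of_length_eq_dist _ <| by
        rw [SimpleGraph.Walk.length_cons, hqlen, G.dist_comm, ← hdist, G.dist_comm]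
    rw [(hG.existsUnique_path v r).unique hp hcons, SimpleGraph.Walk.snd_cons]

-- Colour by the distance to a leaf modulo `3`: the parent of `v` has colour `c v - 1` and its
-- children have colour `c v + 1`.
theorem seesOtherColors_dist [G.LocallyFinite] (hG : G.IsTree) {r : V} (hr : G.degree r = 1) :
    SeesOtherColors G fun v ↦ (G.dist r v : ZMod 3) := by
  intro v hv j hj
  have hvr : v ≠ r := fun h ↦ hv (h ▸ hr)
  obtain ⟨parent, ⟨hparent, hdist⟩, hunique⟩ := existsUnique_adj_dist_eq_dist_add_one hG hvr
  obtain ⟨child, hchild, hne⟩ : ∃ u, G.Adj v u ∧ u ≠ parent := by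
    by_contra! h
    exact hv (SimpleGraph.degree_eq_one_iff_existsUnique_adj.2 ⟨parent, hparent, h⟩)
  have hdist' : G.dist r child = G.dist r v + 1 :=
    (hG.dist_eq_dist_add_one_of_adj r hchild).resolve_left fun h ↦ hne (hunique _ ⟨hchild, h⟩)
  have hcolors : ∀ k l : ZMod 3, k ≠ l → k = l + 1 ∨ k + 1 = l := by decide
  rcases hcolors j _ hj with rfl | hj
  · exact ⟨child, hchild, by simp [hdist']⟩
  · refine ⟨parent, hparent, add_right_cancel (b := 1) ?_⟩
    simp [hj, hdist]

variable [Fintype V] [DecidableRel G.Adj]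

theorem twelve_mul_tR2_add_le [DecidableEq V] (hG : G.IsTree) (hn : 3 ≤ Fintype.card V)
    (hstar : ∀ v, ¬ G.IsUniversal v) :
    12 * tR2 G + #(innerVertices G) + 5 * #(strongSupports G) ≤
      9 * Fintype.card V + 6 * #(supports G) := by
  have : Nontrivial V := Fintype.one_lt_card_iff_nontrivial.1 (by omega)
  obtain ⟨r, hr⟩ := hG.exists_vert_degree_one_of_nontrivial
  have hnonleaf (v : V) : ∃ u, G.Adj v u ∧ G.degree u ≠ 1 := by
    by_contra! h
    exact hstar v (isUniversal_of_forall_adj_degree_eq_one hG.connected h)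
  have hweight := three_mul_tR2_le hnonleaf (seesOtherColors_dist hG hr)
  have hleaves := card_supports_add_card_strongSupports_le (G := G)
  have hcard := card_leaves_add_card_supports_add_card_innerVertices
    (disjoint_leaves_supports hG.connected hn)
  omega

end Tree

section Corona

variable [Fintype V] [DecidableRel G.Adj]

theorem tR2_eq_card_of_isCoronaOfTree (h : IsCoronaOfTree G) : tR2 G = Fintype.card V := by
  obtain ⟨-, m, hinv, -, hadj, hleaf⟩ := h
  have hnbr (v : V) : ∃ u, G.Adj v u := ⟨m v, hadj v⟩
  obtain ⟨f, hf, hsum⟩ := exists_isTR2DF_sum_eq_tR2 hnbr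
  have hpair (v : V) : 2 ≤ f v + f (m v) := by
    rcases hleaf v with hv | hv
    · exact two_le_add_of_adj_of_degree_eq_one hf hv (hadj v)
    · exact (two_le_add_of_adj_of_degree_eq_one hf hv (hadj v).symm).trans_eq (Nat.add_comm _ _)
  have hcomp : ∑ v, f (m v) = ∑ v, f v := Equiv.sum_comp hinv.toPerm f
  have htwice : 2 * Fintype.card V ≤ 2 * tR2 G :=
    calc 2 * Fintype.card V = ∑ _v : V, 2 := by simp [mul_comm]
      _ ≤ ∑ v, (f v + f (m v)) := sum_le_sum fun v _ ↦ hpair v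
      _ = 2 * tR2 G := by
        rw [sum_add_distrib, hcomp, hsum, two_mul]
  exact (tR2_le_card hnbr).antisymm (by omega)

theorem card_eq_two_mul_card_supports_of_isCoronaOfTree (h : IsCoronaOfTree G)
    (hn : 3 ≤ Fintype.card V) : Fintype.card V = 2 * #(supports G) := by
  classical
  obtain ⟨hG, m, hinv, -, hadj, hleaf⟩ := h
  have hdisj := disjoint_leaves_supports hG.connected hn
  have hmatch (v : V) : v ∈ supports G ↔ m v ∈ leaves G := by
    refine ⟨fun hv ↦ ?_, fun hv ↦ mem_supports.2 ⟨m v, hadj v, mem_leaves.1 hv⟩⟩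
    exact mem_leaves.2 ((hleaf v).resolve_left fun h ↦ disjoint_right.1 hdisj hv (mem_leaves.2 h))
  have hleaves : #(supports G) = #(leaves G) := card_bijective m hinv.bijective hmatch
  have hinner : innerVertices G = ∅ := by
    refine eq_empty_of_forall_notMem fun v hv ↦ ?_
    obtain ⟨hvL, hvS⟩ := mem_innerVertices.1 hv
    exact hvS ((hmatch v).2 (mem_leaves.2 ((hleaf v).resolve_left (mt mem_leaves.2 hvL))))
  have hcard := card_leaves_add_card_supports_add_card_innerVertices hdisj
  rw [hinner, card_empty] at hcard
  omega

theorem isCoronaOfTree_of_innerVertices_eq_empty [DecidableEq V] (hG : G.IsTree)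
    (hn : 3 ≤ Fintype.card V) (hinner : innerVertices G = ∅) (hstrong : strongSupports G = ∅) :
    IsCoronaOfTree G := by
  have : Nontrivial V := Fintype.one_lt_card_iff_nontrivial.1 (by omega)
  have hpartner (v : V) : ∃ u, G.Adj v u ∧ (G.degree v = 1 ∨ G.degree u = 1) := by
    by_cases hv : G.degree v = 1
    · exact (hG.connected.preconnected.exists_adj_of_nontrivial v).imp fun _ h ↦ ⟨h, .inl hv⟩
    · have hsupp : v ∈ supports G := by_contra fun h ↦
        notMem_empty v (hinner ▸ mem_innerVertices.2 ⟨mt mem_leaves.1 hv, h⟩)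
      exact (mem_supports.1 hsupp).imp fun _ h ↦ h.imp_right .inr
  have hunique {s u w : V} (hu : u ∈ leafNeighbors G s) (hw : w ∈ leafNeighbors G s) : u = w :=
    card_le_one.1 (not_lt.1 (mt mem_strongSupports.2 (hstrong ▸ notMem_empty s))) u hu w hw
  choose m hadj hleaf using hpartner
  refine ⟨hG, m, fun v ↦ ?_, fun v ↦ (hadj v).ne', hadj, hleaf⟩
  rcases hleaf v with hv | hv
  · have hmv := degree_ne_one_of_adj_of_degree_eq_one hG.connected hn (hadj v) hv
    exact hunique (mem_leafNeighbors.2 ⟨hadj (m v), (hleaf (m v)).resolve_left hmv⟩)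
      (mem_leafNeighbors.2 ⟨(hadj v).symm, hv⟩)
  · exact eq_of_adj_of_degree_eq_one hv (hadj (m v)) (hadj v).symm

theorem four_mul_tR2_eq_of_isCoronaOfTree (h : IsCoronaOfTree G) (hn : 3 ≤ Fintype.card V) :
    4 * tR2 G = 3 * Fintype.card V + 2 * #(supports G) := by
  have htR2 := tR2_eq_card_of_isCoronaOfTree h
  have hcard := card_eq_two_mul_card_supports_of_isCoronaOfTree h hn
  omega

theorem four_mul_tR2_lt_of_not_isCoronaOfTree (hG : G.IsTree) (hn : 4 ≤ Fintype.card V)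
    (h : ¬ IsCoronaOfTree G) : 4 * tR2 G < 3 * Fintype.card V + 2 * #(supports G) := by
  classical
  have : Nontrivial V := Fintype.one_lt_card_iff_nontrivial.1 (by omega)
  by_cases hstar : ∃ s, G.IsUniversal s
  · obtain ⟨s, hs⟩ := hstar
    have htR2 := tR2_le_three_of_isUniversal hs
    have hsupp := (supports_nonempty_of_isTree hG).card_pos
    omega
  · have hle := twelve_mul_tR2_add_le hG (by omega) (not_exists.1 hstar)
    have hpos : 0 < #(innerVertices G) + #(strongSupports G) := by
      by_contra! hzero
      obtain ⟨hinner, hstrong⟩ := Nat.add_eq_zero_iff.1 (Nat.le_zero.1 hzero)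
      exact h (isCoronaOfTree_of_innerVertices_eq_empty hG (by omega) (card_eq_zero.1 hinner)
        (card_eq_zero.1 hstrong))
    omega

end Corona

end TotalRomanDomination

theorem stmt19 {V : Type*} [Fintype V] (T : SimpleGraph V) [DecidableRel T.Adj]
    (htree : T.IsTree) (hn : 4 ≤ Fintype.card V) :
    4 * tR2 T ≤ 3 * Fintype.card V +
        2 * (Finset.univ.filter fun v => ∃ u, T.Adj v u ∧ T.degree u = 1).card ∧
      (4 * tR2 T = 3 * Fintype.card V +
        2 * (Finset.univ.filter fun v => ∃ u, T.Adj v u ∧ T.degree u = 1).card ↔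
        IsCoronaOfTree T) := by
  by_cases h : IsCoronaOfTree T
  · have heq := TotalRomanDomination.four_mul_tR2_eq_of_isCoronaOfTree h (by omega)
    exact ⟨heq.le, fun _ ↦ h, fun _ ↦ heq⟩
  · have hlt := TotalRomanDomination.four_mul_tR2_lt_of_not_isCoronaOfTree htree hn h
    exact ⟨hlt.le, fun heq ↦ absurd heq hlt.ne, fun h' ↦ absurd h' h⟩
end
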